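/- Let N ≥ 1 and p, q ≥ 0 with pq > 1 and (pq − 1)/(max{p,q} + 1) > 2/N. Then there exist nonnegative measurable functions u₀, v₀ on ℝ^N, not both identically zero, such that the system (S) possesses a global-in-time solution (u,v) on ℝ^N × (0,∞) with u(x,t) > 0 and v(x,t) > 0 for a.e. x ∈ ℝ^N and all t > 0. -/

import Mathlib

open MeasureTheory ENNReal Filter

noncomputable section

/-- Euclidean space `ℝ^N`. -/
abbrev Euc (N : ℕ) := EuclideanSpace ℝ (Fin N)

/-- The heat semigroup applied to a (nonnegative) function `φ` on `ℝ^N`, with values in `[0,∞]`: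
`[S(t)φ](x) = ∫ (4πt)^{-N/2} exp(-|x-y|²/(4t)) φ(y) dy`. -/
noncomputable def heatS (N : ℕ) (t : ℝ) (φ : Euc N → ℝ) (x : Euc N) : ℝ≥0∞ :=
  ∫⁻ y, ENNReal.ofReal
    ((4 * Real.pi * t) ^ (-(N : ℝ) / 2) * Real.exp (-‖x - y‖ ^ 2 / (4 * t)) * φ y)

/-- The `L^∞` norm of `S(t)φ` on `ℝ^N`. -/
noncomputable def heatSup (N : ℕ) (t : ℝ) (φ : Euc N → ℝ) : ℝ≥0∞ :=
  essSup (heatS N t φ) volume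

/-- The `L^{r,∞}(E)` quasinorm: for `1 < r < ∞` it is
`sup_{λ>0} λ |{x ∈ E : |f x| > λ}|^{1/r}`; for `r = 1` (resp. `r = ∞`)
it is the usual `L¹(E)` (resp. `L^∞(E)`) norm. -/
noncomputable def wnorm (N : ℕ) (r : ℝ≥0∞) (f : Euc N → ℝ) (E : Set (Euc N)) : ℝ≥0∞ :=
  if r = 1 then ∫⁻ x in E, ENNReal.ofReal |f x|
  else if r = ⊤ then essSup (fun x => ENNReal.ofReal |f x|) (volume.restrict E)
  else ⨆ (l : ℝ) (_ : 0 < l), ENNReal.ofReal l * (volume {x ∈ E | l < |f x|}) ^ (1 / r.toReal)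

/-- The uniformly local quasinorm `|||f|||_{r,ρ} = sup_x ‖f‖_{L^{r,∞}(B(x,ρ))}`
(for `r = ∞` it is the `L^∞(ℝ^N)` norm). -/
noncomputable def ulocNorm (N : ℕ) (r : ℝ≥0∞) (ρ : ℝ) (f : Euc N → ℝ) : ℝ≥0∞ :=
  if r = ⊤ then essSup (fun x => ENNReal.ofReal |f x|) volume
  else ⨆ x : Euc N, wnorm N r f (Metric.ball x ρ)

/-- `u ∈ L^∞(τ, T-τ; L^∞(ℝ^N))` for every `τ ∈ (0, T/2)`. -/
def LocBdd (N : ℕ) (T : ℝ≥0∞) (u : Euc N → ℝ → ℝ) : Prop :=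
  ∀ τ : ℝ, 0 < τ → ENNReal.ofReal (2 * τ) < T →
    ∃ M : ℝ, ∀ t : ℝ, τ ≤ t → ENNReal.ofReal (t + τ) ≤ T →
      ∀ᵐ x ∂(volume : Measure (Euc N)), |u x t| ≤ M

/-- Regularity requirements on a pair `(u,v)`: nonnegativity, joint measurability and
uniform boundedness away from `t = 0` and `t = T`. -/
def PairRegular (N : ℕ) (T : ℝ≥0∞) (u v : Euc N → ℝ → ℝ) : Prop :=
  (∀ x t, 0 ≤ u x t) ∧ (∀ x t, 0 ≤ v x t) ∧
  Measurable (Function.uncurry u) ∧ Measurable (Function.uncurry v) ∧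
  LocBdd N T u ∧ LocBdd N T v

/-- The Duhamel identities for the system (S) `∂ₜu = Δu + v^p`, `∂ₜv = Δv + u^q` at time `t`. -/
def DuhamelSys (N : ℕ) (p q : ℝ) (u₀ v₀ : Euc N → ℝ) (u v : Euc N → ℝ → ℝ) (t : ℝ) : Prop :=
  (∀ᵐ x ∂(volume : Measure (Euc N)), ENNReal.ofReal (u x t) =
      heatS N t u₀ x + ∫⁻ s in Set.Ioo 0 t, heatS N (t - s) (fun y => v y s ^ p) x) ∧
  (∀ᵐ x ∂(volume : Measure (Euc N)), ENNReal.ofReal (v x t) =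
      heatS N t v₀ x + ∫⁻ s in Set.Ioo 0 t, heatS N (t - s) (fun y => u y s ^ q) x)

/-- The Duhamel inequalities (`≥`, with finite left-hand side) for the system (S) at time `t`. -/
def DuhamelSuperSys (N : ℕ) (p q : ℝ) (u₀ v₀ : Euc N → ℝ) (u v : Euc N → ℝ → ℝ) (t : ℝ) : Prop :=
  (∀ᵐ x ∂(volume : Measure (Euc N)),
      heatS N t u₀ x + (∫⁻ s in Set.Ioo 0 t, heatS N (t - s) (fun y => v y s ^ p) x) ≤
        ENNReal.ofReal (u x t)) ∧
  (∀ᵐ x ∂(volume : Measure (Euc N)),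
      heatS N t v₀ x + (∫⁻ s in Set.Ioo 0 t, heatS N (t - s) (fun y => u y s ^ q) x) ≤
        ENNReal.ofReal (v x t))

/-- `(u,v)` is a solution of the system (S) on `ℝ^N × (0,T)`. -/
def IsSolSys (N : ℕ) (p q : ℝ) (u₀ v₀ : Euc N → ℝ) (T : ℝ≥0∞) (u v : Euc N → ℝ → ℝ) : Prop :=
  PairRegular N T u v ∧
  ∀ t : ℝ, 0 < t → ENNReal.ofReal t < T → DuhamelSys N p q u₀ v₀ u v t

/-- `(u,v)` is a supersolution of the system (S) on `ℝ^N × (0,T)`. -/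
def IsSuperSys (N : ℕ) (p q : ℝ) (u₀ v₀ : Euc N → ℝ) (T : ℝ≥0∞) (u v : Euc N → ℝ → ℝ) : Prop :=
  PairRegular N T u v ∧
  ∀ t : ℝ, 0 < t → ENNReal.ofReal t < T → DuhamelSuperSys N p q u₀ v₀ u v t

/-- `(u,v)` is the minimal solution of the system (S) on `ℝ^N × (0,T)`. -/
def IsMinSolSys (N : ℕ) (p q : ℝ) (u₀ v₀ : Euc N → ℝ) (T : ℝ≥0∞)
    (u v : Euc N → ℝ → ℝ) : Prop :=
  IsSolSys N p q u₀ v₀ T u v ∧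
  ∀ u' v' : Euc N → ℝ → ℝ, IsSolSys N p q u₀ v₀ T u' v' →
    ∀ t : ℝ, 0 < t → ENNReal.ofReal t < T →
      (∀ᵐ x ∂(volume : Measure (Euc N)), u x t ≤ u' x t) ∧
      (∀ᵐ x ∂(volume : Measure (Euc N)), v x t ≤ v' x t)

/-- Regularity requirements on a scalar function `w`. -/
def ScalarRegular (N : ℕ) (T : ℝ≥0∞) (w : Euc N → ℝ → ℝ) : Prop :=
  (∀ x t, 0 ≤ w x t) ∧ Measurable (Function.uncurry w) ∧ LocBdd N T w

/-- The Duhamel identity for the scalar problem (E) `∂ₜw = Δw + α w^A + β w^B` at time `t`. -/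
def DuhamelScalar (N : ℕ) (α β A B : ℝ) (w₀ : Euc N → ℝ) (w : Euc N → ℝ → ℝ) (t : ℝ) : Prop :=
  ∀ᵐ x ∂(volume : Measure (Euc N)), ENNReal.ofReal (w x t) =
    heatS N t w₀ x +
      ∫⁻ s in Set.Ioo 0 t, heatS N (t - s) (fun y => α * w y s ^ A + β * w y s ^ B) x

/-- The Duhamel inequality (`≥`, with finite left-hand side) for the scalar problem (E). -/
def DuhamelSuperScalar (N : ℕ) (α β A B : ℝ) (w₀ : Euc N → ℝ) (w : Euc N → ℝ → ℝ)
    (t : ℝ) : Prop :=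
  ∀ᵐ x ∂(volume : Measure (Euc N)),
    heatS N t w₀ x +
        (∫⁻ s in Set.Ioo 0 t, heatS N (t - s) (fun y => α * w y s ^ A + β * w y s ^ B) x) ≤
      ENNReal.ofReal (w x t)

/-- `w` is a solution of the scalar problem (E) on `ℝ^N × (0,T)`. -/
def IsSolScalar (N : ℕ) (α β A B : ℝ) (w₀ : Euc N → ℝ) (T : ℝ≥0∞)
    (w : Euc N → ℝ → ℝ) : Prop :=
  ScalarRegular N T w ∧
  ∀ t : ℝ, 0 < t → ENNReal.ofReal t < T → DuhamelScalar N α β A B w₀ w t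

/-- `w` is a supersolution of the scalar problem (E) on `ℝ^N × (0,T)`. -/
def IsSuperScalar (N : ℕ) (α β A B : ℝ) (w₀ : Euc N → ℝ) (T : ℝ≥0∞)
    (w : Euc N → ℝ → ℝ) : Prop :=
  ScalarRegular N T w ∧
  ∀ t : ℝ, 0 < t → ENNReal.ofReal t < T → DuhamelSuperScalar N α β A B w₀ w t

/-- The Duhamel identities for the strongly coupled system (SC)
`∂ₜu = Δu + u^{p₁} v^{p₂}`, `∂ₜv = Δv + u^{q₁} v^{q₂}` at time `t`. -/
def DuhamelSC (N : ℕ) (p₁ p₂ q₁ q₂ : ℝ) (u₀ v₀ : Euc N → ℝ) (u v : Euc N → ℝ → ℝ)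
    (t : ℝ) : Prop :=
  (∀ᵐ x ∂(volume : Measure (Euc N)), ENNReal.ofReal (u x t) =
      heatS N t u₀ x +
        ∫⁻ s in Set.Ioo 0 t, heatS N (t - s) (fun y => u y s ^ p₁ * v y s ^ p₂) x) ∧
  (∀ᵐ x ∂(volume : Measure (Euc N)), ENNReal.ofReal (v x t) =
      heatS N t v₀ x +
        ∫⁻ s in Set.Ioo 0 t, heatS N (t - s) (fun y => u y s ^ q₁ * v y s ^ q₂) x)

/-- `(u,v)` is a solution of the strongly coupled system (SC) on `ℝ^N × (0,T)`. -/
def IsSolSC (N : ℕ) (p₁ p₂ q₁ q₂ : ℝ) (u₀ v₀ : Euc N → ℝ) (T : ℝ≥0∞)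
    (u v : Euc N → ℝ → ℝ) : Prop :=
  PairRegular N T u v ∧
  ∀ t : ℝ, 0 < t → ENNReal.ofReal t < T → DuhamelSC N p₁ p₂ q₁ q₂ u₀ v₀ u v t

/-- Heat kernel as an extended nonnegative function. -/
def hk (N : ℕ) (t : ℝ) (x y : Euc N) : ℝ≥0∞ :=
  ENNReal.ofReal ((4 * Real.pi * t) ^ (-(N : ℝ) / 2) * Real.exp (-‖x - y‖ ^ 2 / (4 * t)))

lemma heatS_eq (N : ℕ) {t : ℝ} (ht : 0 < t) (φ : Euc N → ℝ) (x : Euc N) :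
    heatS N t φ x = ∫⁻ y, hk N t x y * ENNReal.ofReal (φ y) := by
  unfold heatS hk
  congr 1; ext y
  rw [ENNReal.ofReal_mul]
  positivity

lemma gauss_sq (N : ℕ) {t c : ℝ} (ht : 0 < t) (hc : 0 < c) (x y : Euc N) :
    -‖x - y‖ ^ 2 / (4 * t) + -c * ‖y‖ ^ 2 =
      -(c * ‖x‖ ^ 2 / (1 + 4 * c * t)) +
        -((1 + 4 * c * t) / (4 * t)) * ‖y - (1 / (1 + 4 * c * t)) • x‖ ^ 2 := by
  have h1 : (1 + 4 * c * t) ≠ 0 := by positivity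
  rw [norm_sub_sq_real, norm_sub_sq_real, norm_smul, inner_smul_right, real_inner_comm y x,
    mul_pow, Real.norm_eq_abs, sq_abs]
  field_simp
  ring

lemma heat_gauss (N : ℕ) {t c : ℝ} (ht : 0 < t) (hc : 0 < c) (x : Euc N) :
    ∫⁻ y, hk N t x y * ENNReal.ofReal (Real.exp (-c * ‖y‖ ^ 2)) =
      ENNReal.ofReal ((1 + 4 * c * t) ^ (-(N : ℝ) / 2) *
        Real.exp (-(c * ‖x‖ ^ 2 / (1 + 4 * c * t)))) := by
  set b : ℝ := (1 + 4 * c * t) / (4 * t) with hb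
  have hb0 : 0 < b := by positivity
  set w : Euc N := (1 / (1 + 4 * c * t)) • x with hw
  have hI : ∫ y : Euc N, Real.exp (-b * ‖y‖ ^ 2) = (Real.pi / b) ^ ((N : ℝ) / 2) := by
    have := GaussianFourier.integral_rexp_neg_mul_sq_norm (V := Euc N) hb0
    simpa using this
  have hpos : 0 < ∫ y : Euc N, Real.exp (-b * ‖y‖ ^ 2) := by
    rw [hI]; positivity
  have hint : Integrable (fun y : Euc N => Real.exp (-b * ‖y‖ ^ 2)) := by
    by_contra h
    rw [integral_undef h] at hpos
    exact lt_irrefl _ hpos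
  have hL : ∫⁻ y : Euc N, ENNReal.ofReal (Real.exp (-b * ‖y - w‖ ^ 2)) =
      ENNReal.ofReal ((Real.pi / b) ^ ((N : ℝ) / 2)) := by
    rw [lintegral_sub_right_eq_self
      (fun y : Euc N => ENNReal.ofReal (Real.exp (-b * ‖y‖ ^ 2))) w, ← hI]
    rw [ofReal_integral_eq_lintegral_ofReal hint]
    exact Eventually.of_forall fun y => (Real.exp_pos _).le
  have hfun : ∀ y : Euc N, hk N t x y * ENNReal.ofReal (Real.exp (-c * ‖y‖ ^ 2)) =
      ENNReal.ofReal ((4 * Real.pi * t) ^ (-(N : ℝ) / 2) *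
        Real.exp (-(c * ‖x‖ ^ 2 / (1 + 4 * c * t)))) *
        ENNReal.ofReal (Real.exp (-b * ‖y - w‖ ^ 2)) := by
    intro y
    unfold hk
    rw [← ENNReal.ofReal_mul (by positivity), ← ENNReal.ofReal_mul (by positivity),
      mul_assoc _ (Real.exp _) (Real.exp _), mul_assoc _ (Real.exp _) (Real.exp _),
      ← Real.exp_add, ← Real.exp_add, gauss_sq N ht hc x y]
  simp_rw [hfun]
  rw [lintegral_const_mul' _ _ ENNReal.ofReal_ne_top, hL, ← ENNReal.ofReal_mul (by positivity)]
  congr 1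
  have h1 : (4 * Real.pi * t) ^ (-(N : ℝ) / 2) * (Real.pi / b) ^ ((N : ℝ) / 2) =
      (1 + 4 * c * t) ^ (-(N : ℝ) / 2) := by
    have e : Real.pi / b = (4 * Real.pi * t) * (1 + 4 * c * t)⁻¹ := by
      rw [hb]; field_simp
    have hT : 0 < 4 * Real.pi * t := by positivity
    have hD : 0 < 1 + 4 * c * t := by positivity
    rw [e, Real.mul_rpow hT.le (inv_pos.2 hD).le, ← mul_assoc,
      ← Real.rpow_add (by positivity), Real.inv_rpow (by positivity),
      ← Real.rpow_neg (by positivity)]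
    rw [show -(N : ℝ) / 2 + N / 2 = 0 by ring, Real.rpow_zero, one_mul]
    congr 1; ring
  rw [← h1]; ring

/-- Gaussian profile. -/
def prof (N : ℕ) (A a κ : ℝ) (z : Euc N × ℝ) : ℝ :=
  A * (1 + z.2) ^ (-a) * Real.exp (-(κ / (4 * (1 + z.2))) * ‖z.1‖ ^ 2)

lemma init_bound (N : ℕ) {A a κ t : ℝ} (hA : 0 < A) (hκ : 0 < κ) (hκ1 : κ ≤ 1)
    (ha : a < (N : ℝ) / 2) (ht : 0 < t) (x : Euc N) :
    ∫⁻ y, hk N t x y * ENNReal.ofReal (A * κ ^ ((N : ℝ) / 2) * Real.exp (-(κ / 4) * ‖y‖ ^ 2)) ≤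
      ENNReal.ofReal (prof N A a κ (x, t)) := by
  have h : ∀ y : Euc N, hk N t x y *
      ENNReal.ofReal (A * κ ^ ((N : ℝ) / 2) * Real.exp (-(κ / 4) * ‖y‖ ^ 2)) =
      ENNReal.ofReal (A * κ ^ ((N : ℝ) / 2)) *
        (hk N t x y * ENNReal.ofReal (Real.exp (-(κ / 4) * ‖y‖ ^ 2))) := by
    intro y
    rw [ENNReal.ofReal_mul (by positivity)]; ring
  simp_rw [h]
  rw [lintegral_const_mul' _ _ ENNReal.ofReal_ne_top, heat_gauss N ht (by positivity),
    ← ENNReal.ofReal_mul (by positivity)]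
  apply ENNReal.ofReal_le_ofReal
  unfold prof
  simp only
  rw [mul_assoc A (κ ^ _), mul_assoc A ((1 + t) ^ _), ← mul_assoc (κ ^ _)]
  apply mul_le_mul_of_nonneg_left _ hA.le
  apply mul_le_mul _ _ (by positivity) (by positivity)
  · rw [show 1 + 4 * (κ / 4) * t = 1 + κ * t by ring, neg_div, Real.rpow_neg (by positivity),
      ← div_eq_mul_inv, ← Real.div_rpow (by positivity) (by positivity)]
    have h1 : κ / (1 + κ * t) ≤ (1 + t)⁻¹ := by
      rw [div_le_iff₀ (by positivity), inv_mul_eq_div, le_div_iff₀ (by positivity)]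
      nlinarith
    calc (κ / (1 + κ * t)) ^ ((N : ℝ) / 2) ≤ ((1 + t)⁻¹) ^ ((N : ℝ) / 2) :=
          Real.rpow_le_rpow (by positivity) h1 (by positivity)
      _ = (1 + t) ^ (-((N : ℝ) / 2)) := by
          rw [Real.inv_rpow (by positivity), Real.rpow_neg (by positivity)]
      _ ≤ (1 + t) ^ (-a) := Real.rpow_le_rpow_of_exponent_le (by linarith) (by linarith)
  · apply Real.exp_le_exp.2
    rw [neg_mul, neg_le_neg_iff, div_mul_eq_mul_div, show 1 + 4 * (κ / 4) * t = 1 + κ * t by ring,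
      div_le_div_iff₀ (by positivity) (by positivity)]
    have : 0 ≤ κ * ‖x‖ ^ 2 := by positivity
    have : κ * t ≤ t := by nlinarith
    nlinarith

lemma slice_bound (N : ℕ) {B b p μ A a κ t s : ℝ} (hB : 0 < B) (hp : 0 < p)
    (hκ : 0 < κ) (hκ1 : κ ≤ 1) (hb : b * p = a + 1) (hμ : κ ≤ μ * p)
    (hs : 0 < s) (hst : s < t) (x : Euc N) :
    ∫⁻ y, hk N (t - s) x y * (ENNReal.ofReal (prof N B b μ (y, s))) ^ p ≤
      ENNReal.ofReal (B ^ p * κ ^ (-(N : ℝ) / 2) * (1 + t) ^ (-(N : ℝ) / 2) *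
        Real.exp (-(κ / (4 * (1 + t))) * ‖x‖ ^ 2)) *
        ENNReal.ofReal ((1 + s) ^ ((N : ℝ) / 2 - a - 1)) := by
  have hts : 0 < t - s := by linarith
  have hs1 : 0 < 1 + s := by linarith
  have ht1 : 0 < 1 + t := by linarith
  have h : ∀ y : Euc N, hk N (t - s) x y * (ENNReal.ofReal (prof N B b μ (y, s))) ^ p ≤
      ENNReal.ofReal (B ^ p * (1 + s) ^ (-(a + 1))) *
        (hk N (t - s) x y * ENNReal.ofReal (Real.exp (-(κ / (4 * (1 + s))) * ‖y‖ ^ 2))) := by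
    intro y
    rw [mul_left_comm, ← ENNReal.ofReal_mul (by positivity)]
    gcongr
    unfold prof
    simp only
    rw [ENNReal.ofReal_rpow_of_pos (by positivity)]
    apply ENNReal.ofReal_le_ofReal
    rw [Real.mul_rpow (by positivity) (by positivity), Real.mul_rpow (by positivity)
      (by positivity), ← Real.rpow_mul hs1.le, ← Real.exp_mul, ← hb, neg_mul]
    refine mul_le_mul_of_nonneg_left (Real.exp_le_exp.2 ?_) (by positivity)
    rw [mul_right_comm]
    apply mul_le_mul_of_nonneg_right _ (by positivity)
    rw [neg_mul, neg_le_neg_iff, div_mul_eq_mul_div]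
    gcongr
  refine (lintegral_mono h).trans ?_
  rw [lintegral_const_mul' _ _ ENNReal.ofReal_ne_top, heat_gauss N hts (by positivity),
    ← ENNReal.ofReal_mul (by positivity), ← ENNReal.ofReal_mul (by positivity)]
  apply ENNReal.ofReal_le_ofReal
  have e1 : 1 + 4 * (κ / (4 * (1 + s))) * (t - s) = (1 + s + κ * (t - s)) / (1 + s) := by
    field_simp
  rw [e1]
  have hd : 0 < 1 + s + κ * (t - s) := by positivity
  have hlow : κ * (1 + t) ≤ 1 + s + κ * (t - s) := by nlinarith
  have hup : 1 + s + κ * (t - s) ≤ 1 + t := by nlinarith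
  have c1 : ((1 + s + κ * (t - s)) / (1 + s)) ^ (-(N : ℝ) / 2) ≤
      κ ^ (-(N : ℝ) / 2) * (1 + t) ^ (-(N : ℝ) / 2) * (1 + s) ^ ((N : ℝ) / 2) := by
    rw [Real.div_rpow hd.le hs1.le, div_eq_mul_inv, ← Real.rpow_neg hs1.le,
      ← Real.mul_rpow hκ.le ht1.le, show -(-(N : ℝ) / 2) = (N : ℝ) / 2 by ring]
    apply mul_le_mul_of_nonneg_right _ (by positivity)
    apply Real.rpow_le_rpow_of_nonpos (by positivity) hlow
    have : (0 : ℝ) ≤ N := by positivity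
    linarith
  have c2 : Real.exp (-(κ / (4 * (1 + s)) * ‖x‖ ^ 2 / ((1 + s + κ * (t - s)) / (1 + s)))) ≤
      Real.exp (-(κ / (4 * (1 + t))) * ‖x‖ ^ 2) := by
    apply Real.exp_le_exp.2
    rw [neg_mul, neg_le_neg_iff]
    have : κ / (4 * (1 + s)) * ‖x‖ ^ 2 / ((1 + s + κ * (t - s)) / (1 + s)) =
        κ / (4 * (1 + s + κ * (t - s))) * ‖x‖ ^ 2 := by
      field_simp
    rw [this]
    gcongr
  have e2 : (1 + s) ^ ((N : ℝ) / 2 - a - 1) = (1 + s) ^ (-(a + 1)) * (1 + s) ^ ((N : ℝ) / 2) := by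
    rw [← Real.rpow_add hs1]; congr 1; ring
  calc _ ≤ B ^ p * (1 + s) ^ (-(a + 1)) * ((κ ^ (-(N : ℝ) / 2) * (1 + t) ^ (-(N : ℝ) / 2) *
        (1 + s) ^ ((N : ℝ) / 2)) * Real.exp (-(κ / (4 * (1 + t))) * ‖x‖ ^ 2)) := by
        apply mul_le_mul_of_nonneg_left _ (by positivity)
        exact mul_le_mul c1 c2 (by positivity) (by positivity)
    _ = _ := by rw [e2]; ring

lemma time_bound {d t : ℝ} (hd : 0 < d) (ht : 0 < t) :
    ∫⁻ s in Set.Ioo 0 t, ENNReal.ofReal ((1 + s) ^ (d - 1)) ≤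
      ENNReal.ofReal ((1 + t) ^ d / d) := by
  have hi : IntervalIntegrable (fun s : ℝ => (1 + s) ^ (d - 1)) volume 0 t := by
    apply ContinuousOn.intervalIntegrable
    apply ContinuousOn.rpow_const (by fun_prop)
    intro s hs
    rw [Set.uIcc_of_le ht.le] at hs
    left; linarith [hs.1]
  have hv : ∫ s in (0 : ℝ)..t, (1 + s) ^ (d - 1) = ((1 + t) ^ d - 1) / d := by
    rw [intervalIntegral.integral_comp_add_left (fun s : ℝ => s ^ (d - 1)) 1,
      integral_rpow (Or.inl (by linarith))]
    simp
  rw [restrict_Ioo_eq_restrict_Ioc, ← ofReal_integral_eq_lintegral_ofReal,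
    ← intervalIntegral.integral_of_le ht.le, hv]
  · apply ENNReal.ofReal_le_ofReal
    gcongr
    linarith
  · exact (intervalIntegrable_iff_integrableOn_Ioc_of_le ht.le).1 hi
  · filter_upwards [ae_restrict_mem measurableSet_Ioc] with s hs
    have : 0 < 1 + s := by linarith [hs.1]
    simp only [Pi.zero_apply]
    positivity

/-- Duhamel term. -/
def duh (N : ℕ) (p : ℝ) (g : Euc N × ℝ → ℝ≥0∞) (z : Euc N × ℝ) : ℝ≥0∞ :=
  ∫⁻ s in Set.Ioo 0 z.2, ∫⁻ y, hk N (z.2 - s) z.1 y * g (y, s) ^ p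

lemma duh_bound (N : ℕ) {B b p μ A a κ t : ℝ} (hB : 0 < B) (hp : 0 < p)
    (hκ : 0 < κ) (hκ1 : κ ≤ 1) (hb : b * p = a + 1) (hμ : κ ≤ μ * p)
    (ha : a < (N : ℝ) / 2)
    (hAB : B ^ p * (κ ^ (-(N : ℝ) / 2) / ((N : ℝ) / 2 - a)) ≤ A) (ht : 0 < t) (x : Euc N) :
    duh N p (fun z => ENNReal.ofReal (prof N B b μ z)) (x, t) ≤
      ENNReal.ofReal (prof N A a κ (x, t)) := by
  have hd : 0 < (N : ℝ) / 2 - a := by linarith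
  have ht1 : 0 < 1 + t := by linarith
  unfold duh
  simp only
  calc _ ≤ ∫⁻ s in Set.Ioo 0 t,
        ENNReal.ofReal (B ^ p * κ ^ (-(N : ℝ) / 2) * (1 + t) ^ (-(N : ℝ) / 2) *
        Real.exp (-(κ / (4 * (1 + t))) * ‖x‖ ^ 2)) *
        ENNReal.ofReal ((1 + s) ^ ((N : ℝ) / 2 - a - 1)) := by
        apply setLIntegral_mono' measurableSet_Ioo
        intro s hs
        exact slice_bound (A := A) N hB hp hκ hκ1 hb hμ hs.1 hs.2 x
    _ ≤ ENNReal.ofReal (B ^ p * κ ^ (-(N : ℝ) / 2) * (1 + t) ^ (-(N : ℝ) / 2) *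
        Real.exp (-(κ / (4 * (1 + t))) * ‖x‖ ^ 2)) *
        ENNReal.ofReal ((1 + t) ^ ((N : ℝ) / 2 - a) / ((N : ℝ) / 2 - a)) := by
        rw [lintegral_const_mul' _ _ ENNReal.ofReal_ne_top]
        gcongr
        exact time_bound hd ht
    _ ≤ _ := by
        rw [← ENNReal.ofReal_mul (by positivity)]
        apply ENNReal.ofReal_le_ofReal
        unfold prof
        simp only
        have e : (1 + t) ^ (-(N : ℝ) / 2) * (1 + t) ^ ((N : ℝ) / 2 - a) = (1 + t) ^ (-a) := by
          rw [← Real.rpow_add ht1]; congr 1; ring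
        calc _ = (B ^ p * (κ ^ (-(N : ℝ) / 2) / ((N : ℝ) / 2 - a))) *
              ((1 + t) ^ (-(N : ℝ) / 2) * (1 + t) ^ ((N : ℝ) / 2 - a)) *
              Real.exp (-(κ / (4 * (1 + t))) * ‖x‖ ^ 2) := by ring
          _ ≤ _ := by
            rw [e]
            gcongr

lemma measurable_hk (N : ℕ) : Measurable fun w : ((Euc N × ℝ) × ℝ) × Euc N =>
    hk N (w.1.1.2 - w.1.2) w.1.1.1 w.2 := by
  unfold hk
  fun_prop

lemma measurable_duh (N : ℕ) (p : ℝ) {g : Euc N × ℝ → ℝ≥0∞} (hg : Measurable g) :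
    Measurable (duh N p g) := by
  have h1 : Measurable fun w : ((Euc N × ℝ) × ℝ) × Euc N =>
      hk N (w.1.1.2 - w.1.2) w.1.1.1 w.2 * g (w.2, w.1.2) ^ p := by
    refine (measurable_hk N).mul (Measurable.pow_const ?_ _)
    exact hg.comp (by fun_prop)
  have h2 := h1.lintegral_prod_right' (ν := (volume : Measure (Euc N)))
  have hset : MeasurableSet {w : (Euc N × ℝ) × ℝ | 0 < w.2 ∧ w.2 < w.1.2} :=
    (measurableSet_lt measurable_const measurable_snd).inter
      (measurableSet_lt measurable_snd (by fun_prop))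
  have h3 := (h2.indicator hset).lintegral_prod_right' (ν := (volume : Measure ℝ))
  convert h3 using 2 with z
  unfold duh
  rw [← lintegral_indicator measurableSet_Ioo]
  rfl

lemma measurable_slice (N : ℕ) (p : ℝ) {g : Euc N × ℝ → ℝ≥0∞} (hg : Measurable g)
    (z : Euc N × ℝ) :
    Measurable fun s : ℝ => ∫⁻ y, hk N (z.2 - s) z.1 y * g (y, s) ^ p := by
  have h0 : Measurable fun w : ℝ × Euc N => hk N (z.2 - w.1) z.1 w.2 := by
    unfold hk
    fun_prop
  have h1 : Measurable fun w : ℝ × Euc N =>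
      hk N (z.2 - w.1) z.1 w.2 * g (w.2, w.1) ^ p :=
    h0.mul ((hg.comp measurable_swap).pow_const p)
  exact h1.lintegral_prod_right' (ν := (volume : Measure (Euc N)))

lemma duh_mono (N : ℕ) {p : ℝ} (hp : 0 < p) {g h : Euc N × ℝ → ℝ≥0∞} {z : Euc N × ℝ}
    (hgh : ∀ y s, 0 < s → g (y, s) ≤ h (y, s)) : duh N p g z ≤ duh N p h z := by
  unfold duh
  apply setLIntegral_mono' measurableSet_Ioo
  intro s hs
  apply lintegral_mono
  intro y
  have := hgh y s hs.1
  dsimp only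
  gcongr

lemma duh_iSup (N : ℕ) {p : ℝ} (hp : 0 < p) {g : ℕ → Euc N × ℝ → ℝ≥0∞}
    (hm : ∀ n, Measurable (g n)) (hg : Monotone g) (z : Euc N × ℝ) :
    duh N p (fun w => ⨆ n, g n w) z = ⨆ n, duh N p (g n) z := by
  have hrp : ∀ w, (⨆ n, g n w) ^ p = ⨆ n, g n w ^ p := fun w =>
    (ENNReal.orderIsoRpow p hp).map_iSup fun n => g n w
  unfold duh
  rw [← lintegral_iSup (fun n => measurable_slice N p (hm n) z)]
  · congr 1
    ext s
    simp_rw [hrp, ENNReal.mul_iSup]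
    rw [lintegral_iSup]
    · intro n
      have h1 : Measurable fun y : Euc N => hk N (z.2 - s) z.1 y := by
        unfold hk; fun_prop
      have h2 : Measurable fun y : Euc N => g n (y, s) := (hm n).comp (by fun_prop)
      exact h1.mul (h2.pow_const p)
    · intro m n hmn y
      have := hg hmn (y, s)
      dsimp only
      gcongr
  · intro m n hmn s
    apply lintegral_mono
    intro y
    have := hg hmn (y, s)
    dsimp only
    gcongr

/-- Initial term. -/
def ini (N : ℕ) (φ : Euc N → ℝ) (z : Euc N × ℝ) : ℝ≥0∞ :=
  ∫⁻ y, hk N z.2 z.1 y * ENNReal.ofReal (φ y)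

lemma measurable_ini (N : ℕ) {φ : Euc N → ℝ} (hφ : Measurable φ) : Measurable (ini N φ) := by
  have h1 : Measurable fun w : (Euc N × ℝ) × Euc N =>
      hk N w.1.2 w.1.1 w.2 * ENNReal.ofReal (φ w.2) := by
    refine Measurable.mul ?_ (hφ.comp measurable_snd).ennreal_ofReal
    unfold hk
    fun_prop
  exact h1.lintegral_prod_right' (ν := (volume : Measure (Euc N)))

/-- Picard iteration. -/
def iter (N : ℕ) (p q : ℝ) (f g : Euc N → ℝ) :
    ℕ → (Euc N × ℝ → ℝ≥0∞) × (Euc N × ℝ → ℝ≥0∞)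
  | 0 => (fun _ => 0, fun _ => 0)
  | n + 1 => (fun z => ini N f z + duh N p (iter N p q f g n).2 z,
      fun z => ini N g z + duh N q (iter N p q f g n).1 z)

lemma exists_fix (N : ℕ) {p q : ℝ} (hp : 0 < p) (hq : 0 < q) {f g : Euc N → ℝ}
    (hf : Measurable f) (hg : Measurable g) {U V : Euc N × ℝ → ℝ≥0∞}
    (hU : ∀ x t, 0 < t → ini N f (x, t) + duh N p V (x, t) ≤ U (x, t))
    (hV : ∀ x t, 0 < t → ini N g (x, t) + duh N q U (x, t) ≤ V (x, t)) :
    ∃ u v : Euc N × ℝ → ℝ≥0∞, Measurable u ∧ Measurable v ∧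
      (∀ x t, 0 < t → u (x, t) ≤ U (x, t)) ∧ (∀ x t, 0 < t → v (x, t) ≤ V (x, t)) ∧
      (∀ z, u z = ini N f z + duh N p v z) ∧ (∀ z, v z = ini N g z + duh N q u z) := by
  have hm : ∀ n, Measurable (iter N p q f g n).1 ∧ Measurable (iter N p q f g n).2 := by
    intro n
    induction n with
    | zero => exact ⟨measurable_const, measurable_const⟩
    | succ n ih =>
      exact ⟨(measurable_ini N hf).add (measurable_duh N p ih.2),
        (measurable_ini N hg).add (measurable_duh N q ih.1)⟩
  have hmono : ∀ n, (∀ z, (iter N p q f g n).1 z ≤ (iter N p q f g (n + 1)).1 z) ∧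
      (∀ z, (iter N p q f g n).2 z ≤ (iter N p q f g (n + 1)).2 z) := by
    intro n
    induction n with
    | zero => exact ⟨fun z => by simp [iter], fun z => by simp [iter]⟩
    | succ n ih =>
      exact ⟨fun z => add_le_add le_rfl (duh_mono N hp fun y s _ => ih.2 (y, s)),
        fun z => add_le_add le_rfl (duh_mono N hq fun y s _ => ih.1 (y, s))⟩
  have hm1 : Monotone fun n => (iter N p q f g n).1 := monotone_nat_of_le_succ fun n => (hmono n).1
  have hm2 : Monotone fun n => (iter N p q f g n).2 := monotone_nat_of_le_succ fun n => (hmono n).2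
  have hbd : ∀ n, (∀ x t, 0 < t → (iter N p q f g n).1 (x, t) ≤ U (x, t)) ∧
      (∀ x t, 0 < t → (iter N p q f g n).2 (x, t) ≤ V (x, t)) := by
    intro n
    induction n with
    | zero => exact ⟨fun x t _ => by simp [iter], fun x t _ => by simp [iter]⟩
    | succ n ih =>
      exact ⟨fun x t ht => (add_le_add le_rfl (duh_mono N hp ih.2)).trans (hU x t ht),
        fun x t ht => (add_le_add le_rfl (duh_mono N hq ih.1)).trans (hV x t ht)⟩
  refine ⟨fun z => ⨆ n, (iter N p q f g n).1 z, fun z => ⨆ n, (iter N p q f g n).2 z,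
    Measurable.iSup fun n => (hm n).1, Measurable.iSup fun n => (hm n).2,
    fun x t ht => iSup_le fun n => (hbd n).1 x t ht,
    fun x t ht => iSup_le fun n => (hbd n).2 x t ht, fun z => ?_, fun z => ?_⟩
  · rw [duh_iSup N hp (fun n => (hm n).2) hm2, ENNReal.add_iSup]
    have hmz : Monotone fun n => (iter N p q f g n).1 z := fun m n h => hm1 h z
    exact (hmz.iSup_nat_add 1).symm
  · rw [duh_iSup N hq (fun n => (hm n).1) hm1, ENNReal.add_iSup]
    have hmz : Monotone fun n => (iter N p q f g n).2 z := fun m n h => hm2 h z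
    exact (hmz.iSup_nat_add 1).symm

lemma duh_toReal (N : ℕ) {p : ℝ} (hp : 0 < p) {v : Euc N × ℝ → ℝ≥0∞}
    (hv : ∀ x t, 0 < t → v (x, t) ≠ ⊤) (x : Euc N) (t : ℝ) :
    ∫⁻ s in Set.Ioo 0 t, heatS N (t - s) (fun y => (v (y, s)).toReal ^ p) x =
      duh N p v (x, t) := by
  unfold duh
  apply setLIntegral_congr_fun measurableSet_Ioo
  intro s hs
  dsimp only
  rw [heatS_eq N (sub_pos.2 hs.2)]
  congr 1
  ext y
  rw [← ENNReal.ofReal_rpow_of_nonneg ENNReal.toReal_nonneg hp.le,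
    ENNReal.ofReal_toReal (hv y s hs.1)]

lemma prof_le (N : ℕ) {A a κ t : ℝ} (hA : 0 < A) (ha : 0 < a) (hκ : 0 < κ) (ht : 0 < t)
    (x : Euc N) : prof N A a κ (x, t) ≤ A := by
  unfold prof
  dsimp only
  have h1 : (1 + t) ^ (-a) ≤ 1 := Real.rpow_le_one_of_one_le_of_nonpos (by linarith) (by linarith)
  have h2 : Real.exp (-(κ / (4 * (1 + t))) * ‖x‖ ^ 2) ≤ 1 := by
    apply Real.exp_le_one_iff.2
    have : 0 ≤ κ / (4 * (1 + t)) * ‖x‖ ^ 2 := by positivity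
    linarith
  have h3 : 0 < 1 + t := by linarith
  calc _ ≤ A * 1 * 1 := by gcongr
    _ = A := by ring

lemma amp {p q C D : ℝ} (hp : 0 < p) (hpq : 1 < p * q) (hC : 0 < C) (hD : 0 < D) :
    ∃ A B : ℝ, 0 < A ∧ 0 < B ∧ B ^ p * C ≤ A ∧ A ^ q * D ≤ B := by
  have hE : 0 < D ^ p * C := by positivity
  have hr : p * q - 1 ≠ 0 := by linarith
  set A := (D ^ p * C) ^ (-(1 / (p * q - 1))) with hAdef
  have hA : 0 < A := by positivity
  refine ⟨A, A ^ q * D, hA, by positivity, ?_, le_rfl⟩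
  have h1 : A ^ (p * q - 1) = (D ^ p * C)⁻¹ := by
    rw [hAdef, ← Real.rpow_mul hE.le, ← Real.rpow_neg_one]
    congr 1
    field_simp
  have h2 : A ^ (p * q) = A * (D ^ p * C)⁻¹ := by
    rw [← h1, ← Real.rpow_one_add' hA.le (by linarith)]
    congr 1; ring
  rw [Real.mul_rpow (by positivity) hD.le, ← Real.rpow_mul hA.le, mul_comm q p, h2, mul_assoc,
    mul_assoc, inv_mul_cancel₀ hE.ne', mul_one]

lemma prof_add (N : ℕ) (A a κ : ℝ) (z : Euc N × ℝ) :
    prof N (2 * A) a κ z = prof N A a κ z + prof N A a κ z := by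
  unfold prof; ring

lemma prof_pos (N : ℕ) {A a κ t : ℝ} (hA : 0 < A) (ht : 0 < t) (x : Euc N) :
    0 < prof N A a κ (x, t) := by
  unfold prof
  dsimp only
  have h3 : 0 < 1 + t := by linarith
  positivity

lemma ini_pos (N : ℕ) {A κ t : ℝ} (hA : 0 < A) (hκ : 0 < κ) (ht : 0 < t) (x : Euc N) :
    0 < ini N (fun y => A * Real.exp (-(κ / 4) * ‖y‖ ^ 2)) (x, t) := by
  have h : ∀ y : Euc N, hk N t x y *
      ENNReal.ofReal (A * Real.exp (-(κ / 4) * ‖y‖ ^ 2)) =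
      ENNReal.ofReal A * (hk N t x y * ENNReal.ofReal (Real.exp (-(κ / 4) * ‖y‖ ^ 2))) := by
    intro y
    rw [ENNReal.ofReal_mul hA.le]; ring
  unfold ini
  simp_rw [h]
  rw [lintegral_const_mul' _ _ ENNReal.ofReal_ne_top, heat_gauss N ht (by positivity),
    ← ENNReal.ofReal_mul (by positivity)]
  apply ENNReal.ofReal_pos.2
  positivity

/-- Theorem 3.2 (ii) for `Ω = ℝ^N`: if `pq > 1` and
`(pq-1)/(max{p,q}+1) > 2/N`, then for some nonnegative data, not both identically zero,
the system (S) possesses a global-in-time positive solution. -/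
theorem statement15 (N : ℕ) (hN : 1 ≤ N) (p q : ℝ) (hp : 0 ≤ p) (hq : 0 ≤ q)
    (hpq : 1 < p * q) (hfuj : 2 / (N : ℝ) < (p * q - 1) / (max p q + 1)) :
    ∃ u₀ v₀ : Euc N → ℝ, Measurable u₀ ∧ Measurable v₀ ∧
      (∀ x, 0 ≤ u₀ x) ∧ (∀ x, 0 ≤ v₀ x) ∧
      ¬((∀ x, u₀ x = 0) ∧ (∀ x, v₀ x = 0)) ∧
      ∃ u v : Euc N → ℝ → ℝ, IsSolSys N p q u₀ v₀ ⊤ u v ∧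
        ∀ t : ℝ, 0 < t →
          ∀ᵐ x ∂(volume : Measure (Euc N)), 0 < u x t ∧ 0 < v x t := by
  have hp0 : 0 < p := by
    rcases hp.eq_or_lt with h | h
    · rw [← h, zero_mul] at hpq; linarith
    · exact h
  have hq0 : 0 < q := by
    rcases hq.eq_or_lt with h | h
    · rw [← h, mul_zero] at hpq; linarith
    · exact h
  have hr : 0 < p * q - 1 := by linarith
  have hN0 : (0 : ℝ) < N := by exact_mod_cast hN
  have hmax : (max p q + 1) / (p * q - 1) < (N : ℝ) / 2 := by
    have hm : 0 < max p q + 1 := by positivity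
    rw [div_lt_div_iff₀ hN0 hm] at hfuj
    rw [div_lt_div_iff₀ hr two_pos]
    linarith
  set a := (p + 1) / (p * q - 1) with ha
  set b := (q + 1) / (p * q - 1) with hb
  have ha0 : 0 < a := by positivity
  have hb0 : 0 < b := by positivity
  have haN : a < (N : ℝ) / 2 := by
    refine lt_of_le_of_lt ?_ hmax
    rw [ha]; gcongr; exact le_max_left p q
  have hbN : b < (N : ℝ) / 2 := by
    refine lt_of_le_of_lt ?_ hmax
    rw [hb]; gcongr; exact le_max_right p q
  have hr' : p * q - 1 ≠ 0 := hr.ne'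
  have hba : b * p = a + 1 := by
    rw [ha, hb, div_mul_eq_mul_div, div_add_one hr']; congr 1; ring
  have hab : a * q = b + 1 := by
    rw [ha, hb, div_mul_eq_mul_div, div_add_one hr']; congr 1; ring
  set κ := min p 1 with hκ
  set μ := min q 1 with hμ
  have hκ0 : 0 < κ := lt_min hp0 one_pos
  have hμ0 : 0 < μ := lt_min hq0 one_pos
  have hκ1 : κ ≤ 1 := min_le_right _ _
  have hμ1 : μ ≤ 1 := min_le_right _ _
  have hκμ : κ ≤ μ * p := by
    rcases min_choice q 1 with h | h
    · rw [hμ, h]; linarith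
    · rw [hμ, h, one_mul]; exact min_le_left _ _
  have hμκ : μ ≤ κ * q := by
    rcases min_choice p 1 with h | h
    · rw [hκ, h]; linarith
    · rw [hκ, h, one_mul]; exact min_le_left _ _
  have hda : 0 < (N : ℝ) / 2 - a := by linarith
  have hdb : 0 < (N : ℝ) / 2 - b := by linarith
  obtain ⟨A, B, hA, hB, hBA, hAB⟩ := amp (p := p) (q := q)
    (C := 2 * (κ ^ (-(N : ℝ) / 2) / ((N : ℝ) / 2 - a)))
    (D := 2 * (μ ^ (-(N : ℝ) / 2) / ((N : ℝ) / 2 - b))) hp0 hpq (by positivity) (by positivity)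
  set cu := A / 2 * κ ^ ((N : ℝ) / 2) with hcu
  set cv := B / 2 * μ ^ ((N : ℝ) / 2) with hcv
  have hcu0 : 0 < cu := by positivity
  have hcv0 : 0 < cv := by positivity
  have hmu : Measurable fun y : Euc N => cu * Real.exp (-(κ / 4) * ‖y‖ ^ 2) := by fun_prop
  have hmv : Measurable fun y : Euc N => cv * Real.exp (-(μ / 4) * ‖y‖ ^ 2) := by fun_prop
  obtain ⟨u, v, hu, hv, huU, hvV, hue, hve⟩ := exists_fix N hp0 hq0 hmu hmv
    (U := fun z => ENNReal.ofReal (prof N A a κ z))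
    (V := fun z => ENNReal.ofReal (prof N B b μ z))
    (by
      intro x t ht
      have h1 := init_bound N (half_pos hA) hκ0 hκ1 haN ht x
      have h2 := duh_bound N hB hp0 hκ0 hκ1 hba hκμ haN (A := A / 2) (by linarith) ht x
      refine (add_le_add h1 h2).trans ?_
      rw [← ENNReal.ofReal_add (prof_pos N (half_pos hA) ht x).le
        (prof_pos N (half_pos hA) ht x).le, ← prof_add, mul_div_cancel₀ A two_ne_zero])
    (by
      intro x t ht
      have h1 := init_bound N (half_pos hB) hμ0 hμ1 hbN ht x
      have h2 := duh_bound N hA hq0 hμ0 hμ1 hab hμκ hbN (A := B / 2) (by linarith) ht x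
      refine (add_le_add h1 h2).trans ?_
      rw [← ENNReal.ofReal_add (prof_pos N (half_pos hB) ht x).le
        (prof_pos N (half_pos hB) ht x).le, ← prof_add, mul_div_cancel₀ B two_ne_zero])
  have huA : ∀ x t, 0 < t → u (x, t) ≤ ENNReal.ofReal A := fun x t ht =>
    (huU x t ht).trans (ENNReal.ofReal_le_ofReal (prof_le N hA ha0 hκ0 ht x))
  have hvB : ∀ x t, 0 < t → v (x, t) ≤ ENNReal.ofReal B := fun x t ht =>
    (hvV x t ht).trans (ENNReal.ofReal_le_ofReal (prof_le N hB hb0 hμ0 ht x))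
  have hut : ∀ x t, 0 < t → u (x, t) ≠ ⊤ := fun x t ht =>
    ((huA x t ht).trans_lt ENNReal.ofReal_lt_top).ne
  have hvt : ∀ x t, 0 < t → v (x, t) ≠ ⊤ := fun x t ht =>
    ((hvB x t ht).trans_lt ENNReal.ofReal_lt_top).ne
  refine ⟨fun y => cu * Real.exp (-(κ / 4) * ‖y‖ ^ 2), fun y => cv * Real.exp (-(μ / 4) * ‖y‖ ^ 2),
    hmu, hmv, fun x => by positivity, fun x => by positivity, ?_,
    fun x t => (u (x, t)).toReal, fun x t => (v (x, t)).toReal, ⟨⟨fun x t => ENNReal.toReal_nonneg,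
      fun x t => ENNReal.toReal_nonneg, hu.ennreal_toReal, hv.ennreal_toReal, ?_, ?_⟩, ?_⟩, ?_⟩
  · rintro ⟨h, -⟩
    have := h 0
    have h2 : 0 < cu * Real.exp (-(κ / 4) * ‖(0 : Euc N)‖ ^ 2) := by positivity
    exact h2.ne' this
  · intro τ hτ _
    refine ⟨A, fun t ht _ => Eventually.of_forall fun x => ?_⟩
    rw [abs_of_nonneg ENNReal.toReal_nonneg]
    exact ENNReal.toReal_le_of_le_ofReal hA.le (huA x t (by linarith))
  · intro τ hτ _
    refine ⟨B, fun t ht _ => Eventually.of_forall fun x => ?_⟩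
    rw [abs_of_nonneg ENNReal.toReal_nonneg]
    exact ENNReal.toReal_le_of_le_ofReal hB.le (hvB x t (by linarith))
  · intro t ht _
    constructor
    · refine Eventually.of_forall fun x => ?_
      rw [duh_toReal N hp0 hvt, heatS_eq N ht, ENNReal.ofReal_toReal (hut x t ht), hue]
      rfl
    · refine Eventually.of_forall fun x => ?_
      rw [duh_toReal N hq0 hut, heatS_eq N ht, ENNReal.ofReal_toReal (hvt x t ht), hve]
      rfl
  · intro t ht
    refine Eventually.of_forall fun x => ⟨ENNReal.toReal_pos ?_ (hut x t ht),
      ENNReal.toReal_pos ?_ (hvt x t ht)⟩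
    · rw [hue]
      exact ((ini_pos N hcu0 hκ0 ht x).trans_le le_self_add).ne'
    · rw [hve]
      exact ((ini_pos N hcv0 hμ0 ht x).trans_le le_self_add).ne'
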